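/- For every integer n ≥ 6, the convex polytope graph Δ_n has independent metric number 3; i.e., there exists a resolving set of Δ_n of cardinality 3 whose three vertices are pairwise non-adjacent in Δ_n, and Δ_n has no resolving set of cardinality 2. -/

import Mathlib

/-- Vertices of the heptagonal circular ladder: four families indexed by `ZMod n`. -/
inductive HCLVertex (n : ℕ) : Type
  | p (t : ZMod n) : HCLVertex n
  | q (t : ZMod n) : HCLVertex n
  | r (t : ZMod n) : HCLVertex n
  | s (t : ZMod n) : HCLVertex n
deriving DecidableEq

/-- Base relation giving the edges of the heptagonal circular ladder `Γ_n`: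
`p_t p_{t+1}`, `p_t q_t`, `q_t r_t`, `r_t s_t`, `s_t r_{t+1}` (indices mod `n`). -/
def gammaRel (n : ℕ) : HCLVertex n → HCLVertex n → Prop
  | .p t, .p u => u = t + 1
  | .p t, .q u => u = t
  | .q t, .r u => u = t
  | .r t, .s u => u = t
  | .s t, .r u => u = t + 1
  | _, _ => False

/-- The heptagonal circular ladder `Γ_n`. -/
def Gamma (n : ℕ) : SimpleGraph (HCLVertex n) :=
  SimpleGraph.fromRel (gammaRel n)

/-- The extra edges `r_t q_{t+1}` added to `Γ_n` to obtain `Δ_n`. -/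
def deltaRel (n : ℕ) : HCLVertex n → HCLVertex n → Prop
  | .r t, .q u => u = t + 1
  | _, _ => False

/-- The convex polytope graph `Δ_n`, obtained from `Γ_n` by adding the edges `r_t q_{t+1}`. -/
def Delta (n : ℕ) : SimpleGraph (HCLVertex n) :=
  SimpleGraph.fromRel (fun v w => gammaRel n v w ∨ deltaRel n v w)

/-- `W` is a resolving set of `G`: every pair of distinct vertices is distinguished by
its distance to some vertex of `W`. -/
def IsResolving {V : Type*} (G : SimpleGraph V) (W : Set V) : Prop :=
  ∀ u v : V, u ≠ v → ∃ w ∈ W, G.dist w u ≠ G.dist w v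

/-- Distance from a vertex `x` to an edge `e = yz`: `min (d x y) (d x z)`. -/
noncomputable def edgeDist {V : Type*} (G : SimpleGraph V) (x : V) (e : Sym2 V) : ℕ :=
  Sym2.lift ⟨fun y z => min (G.dist x y) (G.dist x z), fun y z => min_comm _ _⟩ e

/-- `W` is an edge resolving set of `G`: every pair of distinct edges is distinguished by
its distance to some vertex of `W`. -/
def IsEdgeResolving {V : Type*} (G : SimpleGraph V) (W : Set V) : Prop :=
  ∀ e ∈ G.edgeSet, ∀ f ∈ G.edgeSet, e ≠ f → ∃ w ∈ W, edgeDist G w e ≠ edgeDist G w f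

/-!
Place the vertices on a circle of length `2 n`, with `p_t` and `q_t` at `2 t`, `r_t` at `2 t + 1`
and `s_t` at `2 t + 2`. A shortest path of `Δ_n` either stays on the necklace of `q`, `r` and `s`
vertices, moving one unit per step, or it uses the `p`-cycle, moving two units per step; this gives
a closed formula for the distance.

Upper bound: the vertices `r_{t-1}` and `r_t` tell on which side of the axis through `p_t` a vertex
lies. On one side, a vertex at coordinate `a` whose detour to the `p`-cycle costs `w / 2` is at
distance about `(w + a) / 2` from the nearer of the two and, up to a constant, `(w - a) / 2` from a
`p` vertex opposite to `p_t`; together these determine `w` and `a`, hence the vertex.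

Lower bound: the four neighbours of an `r` vertex cannot be told apart by one further vertex, which
has only three distances available for them. Two vertices of the other kinds are an even distance
apart on the circle, and two vertices that neither of them tells apart are found beside the first
one if they are far apart, and about midway between them if they are near.
-/

/-! ### The cyclic norm -/

/-- The distance from `x` to `0` on the cycle of length `m`. -/
def circNorm {m : ℕ} (x : ZMod m) : ℕ :=
  x.valMinAbs.natAbs

section circNorm

variable {m : ℕ}

theorem circNorm_neg (x : ZMod m) : circNorm (-x) = circNorm x :=
  ZMod.natAbs_valMinAbs_neg x

theorem circNorm_eq_zero {x : ZMod m} : circNorm x = 0 ↔ x = 0 := by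
  rw [circNorm, Int.natAbs_eq_zero, ZMod.valMinAbs_eq_zero]

theorem circNorm_add_le (x y : ZMod m) : circNorm (x + y) ≤ circNorm x + circNorm y :=
  (ZMod.natAbs_valMinAbs_add_le x y).trans (Int.natAbs_add_le _ _)

theorem circNorm_intCast_emod_two (hm : Even m) (z : ℤ) :
    (circNorm (z : ZMod m) : ℤ) % 2 = z % 2 := by
  have hz : ((z : ZMod m).valMinAbs : ZMod m) = z := ZMod.coe_valMinAbs _
  have h2 : (2 : ℤ) ∣ z - (z : ZMod m).valMinAbs :=
    (Int.natCast_dvd_natCast.2 hm.two_dvd).trans ((ZMod.intCast_eq_intCast_iff_dvd_sub _ _ _).1 hz)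
  rw [circNorm]
  omega

variable [NeZero m]

theorem circNorm_intCast {z : ℤ} (hz : z.natAbs ≤ m) :
    circNorm (z : ZMod m) = min z.natAbs (m - z.natAbs) := by
  have hnat {k : ℕ} (hk : k ≤ m) : circNorm (k : ZMod m) = min k (m - k) := by
    rcases hk.lt_or_eq with hk | rfl
    · rw [circNorm, ZMod.valMinAbs_natAbs_eq_min, ZMod.val_natCast_of_lt hk]
    · simp [circNorm]
  rw [← hnat hz]
  obtain ⟨k, rfl | rfl⟩ := z.eq_nat_or_neg <;> simp [circNorm_neg]

theorem circNorm_natCast_le (d : ℕ) : circNorm (d : ZMod m) ≤ d := by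
  refine (ZMod.natAbs_min_of_le_div_two m _ (d : ℤ) ?_ (ZMod.natAbs_valMinAbs_le _)).trans ?_ <;>
    simp

theorem circNorm_add_natCast_le (x : ZMod m) (d : ℕ) :
    circNorm (x + (d : ZMod m)) ≤ circNorm x + d :=
  (circNorm_add_le x d).trans (Nat.add_le_add_left (circNorm_natCast_le d) _)

theorem circNorm_le_add_natCast (x : ZMod m) (d : ℕ) :
    circNorm x ≤ circNorm (x + (d : ZMod m)) + d := by
  have h := circNorm_add_natCast_le (-(x + (d : ZMod m))) d
  rwa [neg_add, neg_add_cancel_right, circNorm_neg, ← neg_add, circNorm_neg] at h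

theorem circNorm_sub_or_add {x : ZMod m} {d : ℕ} (hd : d ≤ circNorm x) :
    circNorm (x - (d : ZMod m)) + d = circNorm x ∨
      circNorm (x + (d : ZMod m)) + d = circNorm x := by
  have hm : circNorm x ≤ m / 2 := ZMod.natAbs_valMinAbs_le x
  obtain ⟨y, hy, hyx⟩ : ∃ y : ℤ, circNorm x = y.natAbs ∧ (y : ZMod m) = x :=
    ⟨x.valMinAbs, rfl, ZMod.coe_valMinAbs x⟩
  rcases le_total 0 y with h | h
  · have := circNorm_intCast (m := m) (z := y - d) (by omega)
    push_cast [hyx] at this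
    omega
  · have := circNorm_intCast (m := m) (z := y + d) (by omega)
    push_cast [hyx] at this
    omega

end circNorm

theorem dist_eq_of_lipschitz_of_descent {V : Type*} {G : SimpleGraph V} {w : V} {f : V → ℕ}
    (hw : f w = 0) (hlip : ∀ u v, G.Adj u v → f v ≤ f u + 1)
    (hdesc : ∀ v, v ≠ w → ∃ u, G.Adj u v ∧ f v = f u + 1) (v : V) : G.dist w v = f v := by
  have hwalk_le {x y : V} (c : G.Walk x y) : f y ≤ f x + c.length := by
    induction c with
    | nil => simp
    | cons h c ih => grind [SimpleGraph.Walk.length_cons]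
  have hwalk (m : ℕ) : ∀ v, f v = m → ∃ c : G.Walk w v, c.length = m := by
    induction m with
    | zero =>
      intro v hv
      obtain rfl : v = w := by
        by_contra hne
        obtain ⟨u, -, hu⟩ := hdesc v hne
        omega
      exact ⟨.nil, rfl⟩
    | succ m ih =>
      intro v hv
      obtain ⟨u, huv, hu⟩ := hdesc v (by rintro rfl; omega)
      obtain ⟨c, hc⟩ := ih u (by omega)
      exact ⟨c.concat huv, by simp [hc]⟩
  obtain ⟨c, hc⟩ := hwalk (f v) v rfl
  obtain ⟨d, hd⟩ := SimpleGraph.Reachable.exists_walk_length_eq_dist ⟨c⟩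
  refine le_antisymm (hc ▸ G.dist_le c) ?_
  simpa [hw, hd] using hwalk_le d

theorem not_isResolving_pair_of_dist_eq {V : Type*} {G : SimpleGraph V} {u v z z' : V}
    (hne : z ≠ z') (hu : G.dist u z = G.dist u z') (hv : G.dist v z = G.dist v z') :
    ¬ IsResolving G {u, v} := by
  intro h
  obtain ⟨w, rfl | rfl, hw⟩ := h z z' hne
  exacts [hw hu, hw hv]

/-! ### Distances in `Δ_n` -/

section Adjacency

variable {n : ℕ} (t : ZMod n)

theorem delta_adj_p_p [Nontrivial (ZMod n)] : (Delta n).Adj (.p t) (.p (t + 1)) := by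
  simp [Delta, gammaRel]

theorem delta_adj_p_q : (Delta n).Adj (.p t) (.q t) := by
  simp [Delta, gammaRel]

theorem delta_adj_q_r : (Delta n).Adj (.q t) (.r t) := by
  simp [Delta, gammaRel]

theorem delta_adj_r_s : (Delta n).Adj (.r t) (.s t) := by
  simp [Delta, gammaRel]

theorem delta_adj_s_r : (Delta n).Adj (.s t) (.r (t + 1)) := by
  simp [Delta, gammaRel]

theorem delta_adj_r_q : (Delta n).Adj (.r t) (.q (t + 1)) := by
  simp [Delta, deltaRel]

end Adjacency

theorem delta_adj_induction {n : ℕ} {P : HCLVertex n → HCLVertex n → Prop}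
    (symm : ∀ u v, P u v → P v u)
    (p_p : ∀ t, P (.p t) (.p (t + 1))) (p_q : ∀ t, P (.p t) (.q t)) (q_r : ∀ t, P (.q t) (.r t))
    (r_s : ∀ t, P (.r t) (.s t)) (s_r : ∀ t, P (.s t) (.r (t + 1)))
    (r_q : ∀ t, P (.r t) (.q (t + 1))) {u v : HCLVertex n} (h : (Delta n).Adj u v) : P u v := by
  have hrel {u v : HCLVertex n} (h : gammaRel n u v ∨ deltaRel n u v) : P u v := by
    cases u <;> cases v <;> simp only [gammaRel, deltaRel, or_false, false_or] at h <;> subst h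
    exacts [p_p _, p_q _, q_r _, r_q _, r_s _, s_r _]
  exact h.2.elim hrel fun h ↦ symm _ _ (hrel h)

/-- The embedding `t ↦ 2 t` of the cycle of length `n` into the cycle of length `2 n`. Positions are
doubled because `r_t` sits halfway between `q_t` and `q_{t+1}`. -/
def doubleHom (n : ℕ) : ZMod n →+ ZMod (2 * n) :=
  ZMod.lift n ⟨(Int.castAddHom _).comp (AddMonoidHom.mulLeft 2), by
    simpa using mod_cast ZMod.natCast_self (2 * n)⟩

theorem doubleHom_intCast {n : ℕ} (i : ℤ) : doubleHom n i = 2 * i := by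
  simp [doubleHom]

theorem doubleHom_one {n : ℕ} : doubleHom n 1 = 2 := by
  simpa using doubleHom_intCast (n := n) 1

theorem doubleHom_injective {n : ℕ} : Function.Injective (doubleHom n) := by
  refine (injective_iff_map_eq_zero _).2 fun t ht ↦ ?_
  obtain ⟨i, rfl⟩ := ZMod.intCast_surjective t
  rw [doubleHom_intCast, ← Int.cast_two, ← Int.cast_mul, ZMod.intCast_zmod_eq_zero_iff_dvd] at ht
  push_cast at ht
  exact (ZMod.intCast_zmod_eq_zero_iff_dvd _ _).2 (Int.dvd_of_mul_dvd_mul_left two_ne_zero ht)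

namespace HCLVertex

variable {n : ℕ}

/-- The angular position of a vertex on a circle of length `2 n`. Every edge of the necklace
`q_t, r_t, {s_t, q_{t+1}}, r_{t+1}, …` covers one unit, an edge of the `p`-cycle two units and a
spoke `p_t q_t` none. -/
def pos : HCLVertex n → ZMod (2 * n)
  | p t => doubleHom n t
  | q t => doubleHom n t
  | r t => doubleHom n t + 1
  | s t => doubleHom n t + 2

/-- The distance from a vertex to the necklace spanned by the `q`, `r` and `s` vertices. -/
def depth : HCLVertex n → ℕ
  | p _ => 1
  | _ => 0

/-- Twice the extra cost of reaching the `p`-cycle, relative to travelling along that cycle at two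
units of position per step; for example `r_t` reaches `p_t` in two steps, during which it gains one
unit of position, so that its weight is `2 * 2 - 1 = 3`. -/
def weight : HCLVertex n → ℕ
  | p _ => 0
  | q _ => 2
  | r _ => 3
  | s _ => 4

/-- The length of a shortest necklace walk between the positions of two vertices. The special case
reflects that `s_t` and `q_{t+1}` share a position but are at distance two on the necklace. -/
def gap (u v : HCLVertex n) : ℕ :=
  match u, v with
  | s _, p _ | s _, q _ | p _, s _ | q _, s _ => max (circNorm (v.pos - u.pos)) 2
  | _, _ => circNorm (v.pos - u.pos)

/-- The distance in `Δ_n` in closed form: a shortest path either follows the necklace or uses the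
`p`-cycle. -/
def deltaDist (u v : HCLVertex n) : ℕ :=
  min (u.depth + u.gap v + v.depth) ((u.weight + u.gap v + v.weight) / 2)

theorem exists_intCast_eq_pos (v : HCLVertex n) :
    ∃ z : ℤ, (z : ZMod (2 * n)) = v.pos ∧ z % 2 = v.weight % 2 := by
  rcases v with t | t | t | t <;> obtain ⟨i, rfl⟩ := ZMod.intCast_surjective t
  · exact ⟨2 * i, by simp [pos, doubleHom_intCast], by simp [weight]⟩
  · exact ⟨2 * i, by simp [pos, doubleHom_intCast], by simp [weight]⟩
  · exact ⟨2 * i + 1, by simp [pos, doubleHom_intCast], by simp [weight]⟩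
  · exact ⟨2 * i + 2, by simp [pos, doubleHom_intCast], by simp [weight]⟩

theorem circNorm_pos_sub_mod_two (u v : HCLVertex n) :
    circNorm (v.pos - u.pos) % 2 = (u.weight + v.weight) % 2 := by
  obtain ⟨y, hy, hyu⟩ := exists_intCast_eq_pos u
  obtain ⟨z, hz, hzv⟩ := exists_intCast_eq_pos v
  have := circNorm_intCast_emod_two (even_two_mul n) (z - y)
  rw [← hy, ← hz, ← Int.cast_sub]
  omega

theorem weight_ne_or_circNorm_pos_sub_ne_zero {u v : HCLVertex n} (hne : v ≠ u) :
    u.weight ≠ v.weight ∨ circNorm (v.pos - u.pos) ≠ 0 := by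
  rw [Ne, Ne, circNorm_eq_zero, sub_eq_zero]
  rcases u with a | a | a | a <;> rcases v with b | b | b | b <;>
    simp_all [weight, pos, doubleHom_injective.eq_iff]

theorem pos_p_add_one (t : ZMod n) : (p (t + 1)).pos = (p t).pos + ((2 : ℕ) : ZMod (2 * n)) := by
  simp [pos, doubleHom_one]

theorem pos_q (t : ZMod n) : (q t).pos = (p t).pos := rfl

theorem pos_r (t : ZMod n) : (r t).pos = (q t).pos + ((1 : ℕ) : ZMod (2 * n)) := by
  simp [pos]

theorem pos_s (t : ZMod n) : (s t).pos = (r t).pos + ((1 : ℕ) : ZMod (2 * n)) := by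
  simp [pos, add_assoc, one_add_one_eq_two]

theorem pos_q_add_one (t : ZMod n) : (q (t + 1)).pos = (r t).pos + ((1 : ℕ) : ZMod (2 * n)) := by
  simp [pos, doubleHom_one, add_assoc, one_add_one_eq_two]

theorem pos_r_add_one (t : ZMod n) : (r (t + 1)).pos = (s t).pos + ((1 : ℕ) : ZMod (2 * n)) := by
  simp [pos, doubleHom_one]

theorem deltaDist_self (w : HCLVertex n) : w.deltaDist w = 0 := by
  have : circNorm (0 : ZMod (2 * n)) = 0 := circNorm_eq_zero.2 rfl
  cases w <;> simp [deltaDist, gap, weight, depth, this]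

section Distance

variable [NeZero n]

theorem circNorm_pos_sub_left_or_right {w u v u' : HCLVertex n} {d : ℕ}
    (hd : d ≤ circNorm (v.pos - w.pos)) (hu : v.pos = u.pos + (d : ZMod (2 * n)))
    (hu' : u'.pos = v.pos + (d : ZMod (2 * n))) :
    circNorm (u.pos - w.pos) + d = circNorm (v.pos - w.pos) ∨
      circNorm (u'.pos - w.pos) + d = circNorm (v.pos - w.pos) := by
  rw [eq_sub_of_add_eq hu.symm, hu', sub_right_comm, add_sub_right_comm]
  exact circNorm_sub_or_add hd

theorem circNorm_pos_sub_near {w u v : HCLVertex n} {d : ℕ}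
    (h : v.pos = u.pos + (d : ZMod (2 * n))) :
    circNorm (v.pos - w.pos) ≤ circNorm (u.pos - w.pos) + d ∧
      circNorm (u.pos - w.pos) ≤ circNorm (v.pos - w.pos) + d := by
  rw [h, add_sub_right_comm]
  exact ⟨circNorm_add_natCast_le _ _, circNorm_le_add_natCast _ _⟩

theorem circNorm_pos_sub_left_or_right_of_one {w u v u' : HCLVertex n}
    (hu : v.pos = u.pos + ((1 : ℕ) : ZMod (2 * n)))
    (hu' : u'.pos = v.pos + ((1 : ℕ) : ZMod (2 * n))) :
    (circNorm (v.pos - w.pos) = 0 ∧ circNorm (u.pos - w.pos) ≤ 1 ∨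
      circNorm (u.pos - w.pos) + 1 = circNorm (v.pos - w.pos)) ∨
      circNorm (u'.pos - w.pos) + 1 = circNorm (v.pos - w.pos) := by
  rw [or_assoc]
  rcases Nat.eq_zero_or_pos (circNorm (v.pos - w.pos)) with h | h
  · exact .inl ⟨h, by simpa [h] using (circNorm_pos_sub_near (w := w) hu).2⟩
  · exact .inr (circNorm_pos_sub_left_or_right h hu hu')

theorem deltaDist_le_of_adj (w : HCLVertex n) {u v : HCLVertex n} (h : (Delta n).Adj u v) :
    w.deltaDist v ≤ w.deltaDist u + 1 := by
  suffices h : w.deltaDist u ≤ w.deltaDist v + 1 ∧ w.deltaDist v ≤ w.deltaDist u + 1 from h.2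
  have hmod (u : HCLVertex n) := circNorm_pos_sub_mod_two w u
  refine delta_adj_induction (P := fun u v ↦ w.deltaDist u ≤ w.deltaDist v + 1 ∧
    w.deltaDist v ≤ w.deltaDist u + 1) (fun u v ↦ And.symm) ?_ ?_ ?_ ?_ ?_ ?_ h <;> intro t
  · have := circNorm_pos_sub_near (w := w) (pos_p_add_one t)
    cases w <;> simp only [deltaDist, gap, weight, depth] <;> omega
  · cases w <;> simp only [deltaDist, gap, weight, depth, pos_q] <;> omega
  · have := circNorm_pos_sub_near (w := w) (pos_r t)
    have := And.intro (hmod (q t)) (hmod (r t))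
    cases w <;> simp only [deltaDist, gap, weight, depth] at * <;> omega
  · have := circNorm_pos_sub_near (w := w) (pos_s t)
    have := And.intro (hmod (r t)) (hmod (s t))
    cases w <;> simp only [deltaDist, gap, weight, depth] at * <;> omega
  · have := circNorm_pos_sub_near (w := w) (pos_r_add_one t)
    have := And.intro (hmod (s t)) (hmod (r (t + 1)))
    cases w <;> simp only [deltaDist, gap, weight, depth] at * <;> omega
  · have := circNorm_pos_sub_near (w := w) (pos_q_add_one t)
    have := And.intro (hmod (r t)) (hmod (q (t + 1)))
    cases w <;> simp only [deltaDist, gap, weight, depth] at * <;> omega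

theorem exists_adj_p_deltaDist_eq (w : HCLVertex n) (t : ZMod n) (hne : p (t + 1) ≠ w) :
    ∃ u, (Delta n).Adj u (p (t + 1)) ∧ w.deltaDist (p (t + 1)) = w.deltaDist u + 1 := by
  by_cases hq : w.deltaDist (p (t + 1)) = w.deltaDist (q (t + 1)) + 1
  · exact ⟨_, (delta_adj_p_q _).symm, hq⟩
  have hmod := circNorm_pos_sub_mod_two w (p (t + 1))
  have hself := weight_ne_or_circNorm_pos_sub_ne_zero hne
  have h2 : 2 ≤ circNorm ((p (t + 1)).pos - w.pos) := by
    cases w <;> simp only [deltaDist, gap, weight, depth, pos_q] at * <;> omega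
  have hn : circNorm ((p (t + 1)).pos - w.pos) ≤ 2 * n / 2 := ZMod.natAbs_valMinAbs_le _
  have : Fact (1 < n) := ⟨by omega⟩
  rcases circNorm_pos_sub_left_or_right h2 (pos_p_add_one t) (pos_p_add_one (t + 1)) with h | h
  on_goal 1 => refine ⟨_, delta_adj_p_p t, ?_⟩
  on_goal 2 => refine ⟨_, (delta_adj_p_p (t + 1)).symm, ?_⟩
  all_goals cases w <;> simp only [deltaDist, gap, weight, depth, pos_q] at * <;> omega

theorem exists_adj_q_deltaDist_eq (w : HCLVertex n) (t : ZMod n) (hne : q (t + 1) ≠ w) :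
    ∃ u, (Delta n).Adj u (q (t + 1)) ∧ w.deltaDist (q (t + 1)) = w.deltaDist u + 1 := by
  by_cases hp : w.deltaDist (q (t + 1)) = w.deltaDist (p (t + 1)) + 1
  · exact ⟨_, delta_adj_p_q _, hp⟩
  have hmod := circNorm_pos_sub_mod_two w (q (t + 1))
  have hself := weight_ne_or_circNorm_pos_sub_ne_zero hne
  have hmodr := circNorm_pos_sub_mod_two w (r t)
  rcases circNorm_pos_sub_left_or_right_of_one (w := w) (pos_q_add_one t) (pos_r (t + 1))
    with h | h
  on_goal 2 => refine ⟨_, (delta_adj_q_r (t + 1)).symm, ?_⟩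
  on_goal 1 => refine ⟨_, delta_adj_r_q t, ?_⟩
  all_goals cases w <;> simp only [deltaDist, gap, weight, depth, pos_q] at * <;> omega

theorem exists_adj_r_deltaDist_eq (w : HCLVertex n) (t : ZMod n) (hne : r (t + 1) ≠ w) :
    ∃ u, (Delta n).Adj u (r (t + 1)) ∧ w.deltaDist (r (t + 1)) = w.deltaDist u + 1 := by
  have hmod := circNorm_pos_sub_mod_two w (r (t + 1))
  have hself := weight_ne_or_circNorm_pos_sub_ne_zero hne
  have h1 : 1 ≤ circNorm ((r (t + 1)).pos - w.pos) := by
    cases w <;> simp only [weight] at * <;> omega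
  by_cases hs : w.weight ≠ 4 ∨ circNorm ((r (t + 1)).pos - w.pos) ≠ 1
  · rcases circNorm_pos_sub_left_or_right h1 (pos_r (t + 1)) (pos_q_add_one (t + 1)) with h | h
    on_goal 1 => refine ⟨_, delta_adj_q_r (t + 1), ?_⟩
    on_goal 2 => refine ⟨_, (delta_adj_r_q (t + 1)).symm, ?_⟩
    all_goals cases w <;> simp only [deltaDist, gap, weight, depth, pos_q] at * <;> omega
  · rcases circNorm_pos_sub_left_or_right h1 (pos_r_add_one t) (pos_s (t + 1)) with h | h
    on_goal 1 => refine ⟨_, delta_adj_s_r t, ?_⟩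
    on_goal 2 => refine ⟨_, (delta_adj_r_s (t + 1)).symm, ?_⟩
    all_goals cases w <;> simp only [deltaDist, gap, weight, depth, pos_q] at * <;> omega

theorem exists_adj_s_deltaDist_eq (w : HCLVertex n) (t : ZMod n) (hne : s t ≠ w) :
    ∃ u, (Delta n).Adj u (s t) ∧ w.deltaDist (s t) = w.deltaDist u + 1 := by
  have hmod := circNorm_pos_sub_mod_two w (s t)
  have hself := weight_ne_or_circNorm_pos_sub_ne_zero hne
  have hmodr := circNorm_pos_sub_mod_two w (r t)
  rcases circNorm_pos_sub_left_or_right_of_one (w := w) (pos_s t) (pos_r_add_one t) with h | h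
  on_goal 2 => refine ⟨_, (delta_adj_s_r t).symm, ?_⟩
  on_goal 1 => refine ⟨_, delta_adj_r_s t, ?_⟩
  all_goals cases w <;> simp only [deltaDist, gap, weight, depth, pos_q] at * <;> omega

theorem dist_delta (w v : HCLVertex n) : (Delta n).dist w v = w.deltaDist v := by
  refine dist_eq_of_lipschitz_of_descent (deltaDist_self w)
    (fun _ _ ↦ deltaDist_le_of_adj w) (fun v hne ↦ ?_) v
  rcases v with t | t | t | t <;> obtain ⟨t, rfl⟩ := add_right_surjective (1 : ZMod n) t
  exacts [exists_adj_p_deltaDist_eq w t hne, exists_adj_q_deltaDist_eq w t hne,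
    exists_adj_r_deltaDist_eq w t hne, exists_adj_s_deltaDist_eq w _ hne]

end Distance

/-! ### Coordinates -/

theorem pos_p_intCast (i : ℤ) : (p (i : ZMod n)).pos = ((2 * i : ℤ) : ZMod (2 * n)) := by
  simp [pos, doubleHom_intCast]

theorem pos_q_intCast (i : ℤ) : (q (i : ZMod n)).pos = ((2 * i : ℤ) : ZMod (2 * n)) := by
  simp [pos, doubleHom_intCast]

theorem pos_r_intCast (i : ℤ) : (r (i : ZMod n)).pos = ((2 * i + 1 : ℤ) : ZMod (2 * n)) := by
  simp [pos, doubleHom_intCast]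

theorem pos_s_intCast (i : ℤ) : (s (i : ZMod n)).pos = ((2 * i + 2 : ℤ) : ZMod (2 * n)) := by
  simp [pos, doubleHom_intCast]

/-- The vertex `u` has coordinate `a` when positions are measured from that of `p_i`, in the
direction given by the sign `ε = ±1`. The coordinate is only determined modulo `2 n`, and is kept
an integer so that distances become linear arithmetic. -/
def HasCoord (i ε a : ℤ) (u : HCLVertex n) : Prop :=
  u.pos = ((2 * i + ε * a : ℤ) : ZMod (2 * n))

variable {u v : HCLVertex n} {i ε a b k κ : ℤ}

theorem hasCoord_p (c : ℤ) : HasCoord i ε (2 * c) (p ((i + ε * c : ℤ) : ZMod n)) := by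
  rw [HasCoord, pos_p_intCast]; congr 1; ring

theorem hasCoord_q (c : ℤ) : HasCoord i ε (2 * c) (q ((i + ε * c : ℤ) : ZMod n)) := by
  rw [HasCoord, pos_q_intCast]; congr 1; ring

theorem hasCoord_s (c : ℤ) : HasCoord i ε (2 * c) (s ((i + ε * c - 1 : ℤ) : ZMod n)) := by
  rw [HasCoord, pos_s_intCast]; congr 1; ring

theorem exists_hasCoord_one_r (hε : ε = 1 ∨ ε = -1) : ∃ t : ZMod n, HasCoord i ε 1 (r t) := by
  rcases hε with rfl | rfl
  · exact ⟨i, by rw [HasCoord, pos_r_intCast]; rfl⟩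
  · exact ⟨((i - 1 : ℤ) : ZMod n), by rw [HasCoord, pos_r_intCast]; congr 1; ring⟩

theorem HasCoord.neg (hu : HasCoord i ε a u) : HasCoord i (-ε) (-a) u := by
  rwa [HasCoord, neg_mul_neg]

theorem HasCoord.add_two_mul (hu : HasCoord i ε a u) : HasCoord i ε (a + 2 * n) u := by
  have := ZMod.natCast_self (2 * n)
  push_cast at this
  simp [HasCoord, show u.pos = _ from hu, mul_add, this]

theorem weight_eq_or (u : HCLVertex n) :
    u.weight = 0 ∨ u.weight = 2 ∨ u.weight = 3 ∨ u.weight = 4 := by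
  cases u <;> simp [weight]

theorem eq_of_hasCoord (hu : HasCoord i ε a u) (hv : HasCoord i ε a v)
    (hw : u.weight = v.weight) : u = v := by
  by_contra hne
  have := weight_ne_or_circNorm_pos_sub_ne_zero hne
  rw [hv, hu, sub_self, circNorm_eq_zero.2 rfl] at this
  omega

theorem exists_pos_eq_doubleHom (hu : u.weight ≠ 3) : ∃ t, u.pos = doubleHom n t := by
  rcases u with t | t | t | t
  exacts [⟨t, rfl⟩, ⟨t, rfl⟩, absurd rfl hu, ⟨t + 1, by simp [pos, doubleHom_one]⟩]

variable [NeZero n]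

theorem exists_hasCoord_of_weight_ne_three (hu : u.weight ≠ 3) (hv : v.weight ≠ 3) :
    ∃ i ε k : ℤ, (ε = 1 ∨ ε = -1) ∧ 0 ≤ k ∧ 2 * k ≤ n ∧
      HasCoord i ε 0 u ∧ HasCoord i ε (2 * k) v := by
  obtain ⟨a, ha⟩ := exists_pos_eq_doubleHom hu
  obtain ⟨b, hb⟩ := exists_pos_eq_doubleHom hv
  obtain ⟨i, rfl⟩ := ZMod.intCast_surjective a
  set x := (b - i).valMinAbs with hx
  have hxn : x.natAbs ≤ n / 2 := ZMod.natAbs_valMinAbs_le _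
  have hbx : b = ((i + x : ℤ) : ZMod n) := by simp [hx]
  obtain ⟨ε, hε, hεx⟩ : ∃ ε : ℤ, (ε = 1 ∨ ε = -1) ∧ ε * x.natAbs = x := by
    rcases x.natAbs_eq with h | h
    exacts [⟨1, .inl rfl, by rw [one_mul, ← h]⟩, ⟨-1, .inr rfl, by rw [neg_one_mul, ← h]⟩]
  refine ⟨i, ε, x.natAbs, hε, Int.natCast_nonneg _, by omega, ?_, ?_⟩
  · simp [HasCoord, ha, doubleHom_intCast]
  · rw [HasCoord, mul_left_comm, hεx, hb, hbx, doubleHom_intCast]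
    push_cast
    ring

theorem HasCoord.circNorm_pos_sub (hε : ε = 1 ∨ ε = -1) (hu : HasCoord i ε a u)
    (hv : HasCoord i ε b v) (hab : (b - a).natAbs ≤ 2 * n) :
    circNorm (v.pos - u.pos) = min (b - a).natAbs (2 * n - (b - a).natAbs) := by
  rw [hu, hv, ← Int.cast_sub, add_sub_add_left_eq_sub, ← mul_sub, ← circNorm_intCast hab]
  rcases hε with rfl | rfl <;> simp [← circNorm_neg (b - a : ZMod (2 * n))]

theorem exists_hasCoord (i : ℤ) (hε : ε = 1 ∨ ε = -1) (u : HCLVertex n) :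
    ∃ a : ℤ, -n < a ∧ a ≤ n ∧ HasCoord i ε a u := by
  obtain ⟨hcast, hlt, hle⟩ :=
    (ZMod.valMinAbs_spec ((ε : ZMod (2 * n)) * (u.pos - 2 * (i : ZMod (2 * n)))) _).1 rfl
  push_cast at hlt hle
  set a := ((ε : ZMod (2 * n)) * (u.pos - 2 * (i : ZMod (2 * n)))).valMinAbs
  refine ⟨a, by omega, by omega, ?_⟩
  rcases hε with rfl | rfl <;> simp [HasCoord, ← hcast]

theorem HasCoord.ne (hε : ε = 1 ∨ ε = -1) (hu : HasCoord i ε a u) (hv : HasCoord i ε b v)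
    (hab : a ≠ b) (hn : (b - a).natAbs < 2 * n) : u ≠ v := by
  rintro rfl
  have h := hu.circNorm_pos_sub hε hv hn.le
  rw [sub_self, circNorm_eq_zero.2 rfl] at h
  omega

/-! ### The lower bound -/

/-- To exhibit `z` and `z'` as a pair unresolved by `u` and `v`, it suffices to compare the closed
formulas once the positions have been replaced by integer coordinates. -/
theorem not_isResolving_of_hasCoord (hε : ε = 1 ∨ ε = -1) {z z' : HCLVertex n} {c c' : ℤ}
    (hu : HasCoord i ε a u) (hv : HasCoord i ε b v) (hz : HasCoord i ε c z)
    (hz' : HasCoord i ε c' z') (hne : z ≠ z')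
    (hbound : ((c - a).natAbs ≤ 2 * n ∧ (c' - a).natAbs ≤ 2 * n) ∧
      (c - b).natAbs ≤ 2 * n ∧ (c' - b).natAbs ≤ 2 * n)
    (hdistu : circNorm (z.pos - u.pos) = min (c - a).natAbs (2 * n - (c - a).natAbs) →
      circNorm (z'.pos - u.pos) = min (c' - a).natAbs (2 * n - (c' - a).natAbs) →
      u.deltaDist z = u.deltaDist z')
    (hdistv : circNorm (z.pos - v.pos) = min (c - b).natAbs (2 * n - (c - b).natAbs) →
      circNorm (z'.pos - v.pos) = min (c' - b).natAbs (2 * n - (c' - b).natAbs) →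
      v.deltaDist z = v.deltaDist z') : ¬ IsResolving (Delta n) {u, v} := by
  obtain ⟨⟨h₁, h₂⟩, h₃, h₄⟩ := hbound
  refine not_isResolving_pair_of_dist_eq hne ?_ ?_ <;> rw [dist_delta, dist_delta]
  · exact hdistu (hu.circNorm_pos_sub hε hz h₁) (hu.circNorm_pos_sub hε hz' h₂)
  · exact hdistv (hv.circNorm_pos_sub hε hz h₃) (hv.circNorm_pos_sub hε hz' h₄)

theorem not_isResolving_of_p_of_p (hε : ε = 1 ∨ ε = -1) (hk : 0 < k) (hkn : 2 * k < n)
    (hu : HasCoord i ε 0 u) (hv : HasCoord i ε (2 * k) v) (hu0 : u.weight = 0)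
    (hv0 : v.weight = 0) : ¬ IsResolving (Delta n) {u, v} := by
  rcases (show 2 * k + 1 ≤ n by omega).lt_or_eq with hn | hn
  · refine not_isResolving_of_hasCoord hε hu hv (hasCoord_p (-1)) (hasCoord_q 0) (by simp)
      (by omega) ?_ ?_ <;> intro h h'
    · cases u <;> simp only [deltaDist, weight, gap, depth, reduceCtorEq] at hu0 ⊢; omega
    · cases v <;> simp only [deltaDist, weight, gap, depth, reduceCtorEq] at hv0 ⊢; omega
  · obtain ⟨t, ht⟩ := exists_hasCoord_one_r (n := n) (i := i) hε
    refine not_isResolving_of_hasCoord hε hu hv (hasCoord_q (-1)) ht (by simp)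
      (by omega) ?_ ?_ <;> intro h h'
    · cases u <;> simp only [deltaDist, weight, gap, depth, reduceCtorEq] at hu0 ⊢; omega
    · cases v <;> simp only [deltaDist, weight, gap, depth, reduceCtorEq] at hv0 ⊢; omega

theorem not_isResolving_of_antipodal (hε : ε = 1 ∨ ε = -1) (hn : 3 ≤ n) (hk : k = 0 ∨ 2 * k = n)
    (hu : HasCoord i ε 0 u) (hv : HasCoord i ε (2 * k) v) : ¬ IsResolving (Delta n) {u, v} := by
  refine not_isResolving_of_hasCoord hε hu hv (hasCoord_p 1) (hasCoord_p (-1))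
    ((hasCoord_p _).ne hε (hasCoord_p _) (by omega) (by omega)) (by omega) ?_ ?_ <;> intro h h'
  · cases u <;> simp only [deltaDist, weight, gap, depth] <;> omega
  · cases v <;> simp only [deltaDist, weight, gap, depth] <;> omega

theorem not_isResolving_of_near (hε : ε = 1 ∨ ε = -1) (hk : 0 < k) (hk4 : k ≤ 4) (hkn : 2 * k < n)
    (hu : HasCoord i ε 0 u) (hv : HasCoord i ε (2 * k) v) (hu0 : u.weight = 2 ∨ u.weight = 4)
    (hv0 : v.weight = 2 ∨ v.weight = 4) : ¬ IsResolving (Delta n) {u, v} := by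
  obtain ⟨c, hc⟩ : ∃ c : ℤ, c = k / 2 ∧ 2 ≤ k ∨ c = -1 ∧ k = 1 := by
    rcases (show 1 ≤ k from hk).lt_or_eq with h | h
    exacts [⟨k / 2, by omega⟩, ⟨-1, by omega⟩]
  refine not_isResolving_of_hasCoord hε hu hv (hasCoord_q c) (hasCoord_s c) (by simp)
    (by omega) ?_ ?_ <;> intro h h'
  · cases u <;> simp only [deltaDist, weight, gap, depth] at hu0 ⊢ <;> omega
  · cases v <;> simp only [deltaDist, weight, gap, depth] at hv0 ⊢ <;> omega

theorem not_isResolving_of_q_of_far (hε : ε = 1 ∨ ε = -1) (hk : 0 < k) (hkn : 2 * k < n)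
    (hu : HasCoord i ε 0 u) (hv : HasCoord i ε (2 * k) v) (hu2 : u.weight = 2)
    (hv3 : v.weight ≠ 3) (hfar : v.weight = 0 ∨ 5 ≤ k) : ¬ IsResolving (Delta n) {u, v} := by
  rcases (show 2 * k + 1 ≤ n by omega).lt_or_eq with hn | hn
  · refine not_isResolving_of_hasCoord hε hu hv (hasCoord_q (-1)) (hasCoord_s 0) (by simp)
      (by omega) ?_ ?_ <;> intro h h'
    · cases u <;> simp only [deltaDist, weight, gap, depth] at hu2 ⊢ <;> omega
    · cases v <;> simp only [deltaDist, weight, gap, depth] at hv3 hfar ⊢ <;> omega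
  · refine not_isResolving_of_hasCoord hε hu hv (hasCoord_p (-1)) (hasCoord_q 1) (by simp)
      (by omega) ?_ ?_ <;> intro h h'
    · cases u <;> simp only [deltaDist, weight, gap, depth] at hu2 ⊢ <;> omega
    · cases v <;> simp only [deltaDist, weight, gap, depth] at hv3 hfar ⊢ <;> omega

theorem not_isResolving_of_s_of_far (hε : ε = 1 ∨ ε = -1) (hk : 0 < k) (hkn : 2 * k < n)
    (hu : HasCoord i ε 0 u) (hv : HasCoord i ε (2 * k) v) (hu4 : u.weight = 4)
    (hv3 : v.weight ≠ 3) (hfar : v.weight = 0 ∨ 5 ≤ k) : ¬ IsResolving (Delta n) {u, v} := by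
  rcases (show 2 * k + 1 ≤ n by omega).lt_or_eq with hn | hn
  · rcases (show 1 ≤ k from hk).eq_or_lt with rfl | hk2
    · refine not_isResolving_of_hasCoord hε hu hv (hasCoord_q (-1)) (hasCoord_s 1) (by simp)
        (by omega) ?_ ?_ <;> intro h h'
      · cases u <;> simp only [deltaDist, weight, gap, depth] at hu4 ⊢ <;> omega
      · cases v <;> simp only [deltaDist, weight, gap, depth] at hv3 hfar ⊢ <;> omega
    · refine not_isResolving_of_hasCoord hε hu hv (hasCoord_q 0) (hasCoord_s 1) (by simp)
        (by omega) ?_ ?_ <;> intro h h'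
      · cases u <;> simp only [deltaDist, weight, gap, depth] at hu4 ⊢ <;> omega
      · cases v <;> simp only [deltaDist, weight, gap, depth] at hv3 hfar ⊢ <;> omega
  · refine not_isResolving_of_hasCoord hε hu hv (hasCoord_q (-1)) (hasCoord_q 0)
      ((hasCoord_q _).ne hε (hasCoord_q _) (by omega) (by omega)) (by omega) ?_ ?_ <;> intro h h'
    · cases u <;> simp only [deltaDist, weight, gap, depth] at hu4 ⊢ <;> omega
    · cases v <;> simp only [deltaDist, weight, gap, depth] at hv3 hfar ⊢ <;> omega

theorem not_isResolving_of_weight_ne_three (hn : 3 ≤ n) (hu : u.weight ≠ 3) (hv : v.weight ≠ 3) :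
    ¬ IsResolving (Delta n) {u, v} := by
  wlog huv : v.weight ≤ u.weight generalizing u v
  · rw [Set.pair_comm]
    exact this hv hu (by omega)
  obtain ⟨i, ε, k, hε, hk0, hkn, hcu, hcv⟩ := exists_hasCoord_of_weight_ne_three hu hv
  by_cases hk : k = 0 ∨ 2 * k = n
  · exact not_isResolving_of_antipodal hε hn hk hcu hcv
  have hweight := weight_eq_or (n := n)
  by_cases hnear : v.weight ≠ 0 ∧ k ≤ 4
  · exact not_isResolving_of_near hε (by omega) hnear.2 (by omega) hcu hcv (by grind) (by grind)
  rcases hweight u with hu0 | hu2 | hu3 | hu4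
  · exact not_isResolving_of_p_of_p hε (by omega) (by omega) hcu hcv hu0 (by omega)
  · exact not_isResolving_of_q_of_far hε (by omega) (by omega) hcu hcv hu2 hv (by omega)
  · exact absurd hu3 hu
  · exact not_isResolving_of_s_of_far hε (by omega) (by omega) hcu hcv hu4 hv (by omega)

/-! ### The upper bound -/

theorem deltaDist_r_of_coord_pos {t : ZMod n} (hε : ε = 1 ∨ ε = -1) (hr : HasCoord i ε 1 (r t))
    (hu : HasCoord i ε a u) (ha0 : 0 < a) (han : a ≤ n) :
    (u.weight = 0 ∨ u.weight + 4 ≤ a) ∧ 2 * ((r t).deltaDist u : ℤ) = u.weight + a + 2 ∨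
      (2 ≤ u.weight ∧ a < u.weight + 4) ∧ ((r t).deltaDist u : ℤ) = a - 1 := by
  have hmod := circNorm_pos_sub_mod_two (r t) u
  have := hr.circNorm_pos_sub hε hu (by omega)
  cases u <;>
    simp only [deltaDist, gap, weight, depth, Nat.cast_zero, true_or, true_and] at hmod ⊢ <;>
    omega

theorem deltaDist_p_of_coord_le {t : ZMod n} (hε : ε = 1 ∨ ε = -1)
    (hp : HasCoord i ε κ (p t)) (hu : HasCoord i ε a u) (ha : a ≤ κ) (hκ : κ - a ≤ n) :
    2 * ((p t).deltaDist u : ℤ) = u.weight + κ - a ∨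
      (u.weight = 4 ∧ a = κ) ∧ (p t).deltaDist u = 3 := by
  have hmod := circNorm_pos_sub_mod_two (p t) u
  have := hp.circNorm_pos_sub hε hu (by omega)
  cases u <;>
    simp only [deltaDist, gap, weight, depth, Nat.cast_zero, true_and] at hmod ⊢ <;>
    omega

theorem eq_of_deltaDist_eq_of_coord_pos {t t' : ZMod n} (hε : ε = 1 ∨ ε = -1)
    (hr : HasCoord i ε 1 (r t)) (hp : HasCoord i ε κ (p t')) (hκ : κ ≤ n + 1)
    (hu : HasCoord i ε a u) (ha : 0 < a ∧ a ≤ n ∧ a ≤ κ)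
    (hv : HasCoord i ε b v) (hb : 0 < b ∧ b ≤ n ∧ b ≤ κ)
    (hdr : (r t).deltaDist u = (r t).deltaDist v) (hdp : (p t').deltaDist u = (p t').deltaDist v) :
    u = v := by
  have hru := deltaDist_r_of_coord_pos hε hr hu ha.1 ha.2.1
  have hrv := deltaDist_r_of_coord_pos hε hr hv hb.1 hb.2.1
  have hpu := deltaDist_p_of_coord_le hε hp hu (by omega) (by omega)
  have hpv := deltaDist_p_of_coord_le hε hp hv (by omega) (by omega)
  have hwu := weight_eq_or u
  have hwv := weight_eq_or v
  obtain ⟨hw, rfl⟩ : u.weight = v.weight ∧ a = b := by omega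
  exact eq_of_hasCoord hu hv hw

theorem deltaDist_r_lt_of_coord_pos {t t' : ZMod n} (hε : ε = 1 ∨ ε = -1)
    (hr : HasCoord i ε 1 (r t)) (hr' : HasCoord i ε (-1) (r t'))
    (hu : HasCoord i ε a u) (ha0 : 0 < a) (han : a < n) :
    (r t).deltaDist u < (r t').deltaDist u := by
  have := hr.circNorm_pos_sub hε hu (by omega)
  have := hr'.circNorm_pos_sub hε hu (by omega)
  cases u <;> simp only [deltaDist, gap, weight, depth] <;> omega

theorem deltaDist_r_eq_of_coord_eq {t t' : ZMod n} (hε : ε = 1 ∨ ε = -1) (hr : HasCoord i ε 1 (r t))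
    (hr' : HasCoord i ε (-1) (r t')) (hu : HasCoord i ε a u) (ha : a = 0 ∨ a = n) :
    (r t).deltaDist u = (r t').deltaDist u := by
  have hn := Nat.pos_of_neZero n
  have h : circNorm (u.pos - (r t).pos) = circNorm (u.pos - (r t').pos) := by
    rw [hr.circNorm_pos_sub hε hu (by omega), hr'.circNorm_pos_sub hε hu (by omega)]
    omega
  cases u <;> simp only [deltaDist, gap, weight, depth, h]

theorem deltaDist_of_coord_zero {t t' : ZMod n} (hε : ε = 1 ∨ ε = -1) (hn : 3 ≤ n)
    (hr : HasCoord i ε 1 (r t)) (hp : HasCoord i ε κ (p t')) (hκ : κ = n ∨ κ = n + 1)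
    (hu : HasCoord i ε 0 u) :
    (u.weight ≠ 3 ∧ (r t).deltaDist u ≤ 2 ∧ (u.weight = 0 ∨ (r t).deltaDist u ≤ 1)) ∧
      2 * ((p t').deltaDist u : ℤ) = u.weight + (2 * n - κ) := by
  have hmodr := circNorm_pos_sub_mod_two (r t) u
  have hmodp := circNorm_pos_sub_mod_two (p t') u
  have := hr.circNorm_pos_sub hε hu (by omega)
  have := hp.circNorm_pos_sub hε hu (by omega)
  cases u <;>
    simp only [deltaDist, gap, weight, depth, Nat.cast_zero, true_or, and_true]
      at hmodr hmodp ⊢ <;>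
    omega

theorem eq_of_deltaDist_eq_of_coord_zero {t t' : ZMod n} (hε : ε = 1 ∨ ε = -1) (hn : 3 ≤ n)
    (hr : HasCoord i ε 1 (r t)) (hp : HasCoord i ε κ (p t')) (hκ : κ = n ∨ κ = n + 1)
    (hu : HasCoord i ε 0 u) (hv : HasCoord i ε b v) (hb : b = 0 ∨ b = n)
    (hdr : (r t).deltaDist u = (r t).deltaDist v) (hdp : (p t').deltaDist u = (p t').deltaDist v) :
    u = v := by
  have hzu := deltaDist_of_coord_zero hε hn hr hp hκ hu
  rcases hb with rfl | rfl
  · have hzv := deltaDist_of_coord_zero hε hn hr hp hκ hv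
    exact eq_of_hasCoord hu hv (by omega)
  · have hrv := deltaDist_r_of_coord_pos hε hr hv (by omega) le_rfl
    have hpv := deltaDist_p_of_coord_le hε hp hv (by omega) (by omega)
    have hwu := weight_eq_or u
    have hwv := weight_eq_or v
    omega

theorem isResolving_of_hasCoord {t t' c : ZMod n} (hn : 3 ≤ n)
    (hr : HasCoord i 1 1 (r t)) (hr' : HasCoord i 1 (-1) (r t')) (hp : HasCoord i 1 κ (p c))
    (hκ : κ = n ∨ κ = n + 1) : IsResolving (Delta n) {r t, r t', p c} := by
  have hone : (1 : ℤ) = 1 ∨ (1 : ℤ) = -1 := .inl rfl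
  have hneg : (-1 : ℤ) = 1 ∨ (-1 : ℤ) = -1 := .inr rfl
  have hp' : HasCoord i (-1) (-κ + 2 * n) (p c) := hp.neg.add_two_mul
  -- The two `r` vertices tell on which side of the axis between them a vertex lies.
  have side {u : HCLVertex n} {a : ℤ} (hu : HasCoord i 1 a u) (hlo : -n < a) (hhi : a ≤ n) :
      (0 < a ∧ a < n) ∧ (r t).deltaDist u < (r t').deltaDist u ∨
      a < 0 ∧ (r t').deltaDist u < (r t).deltaDist u ∨
      (a = 0 ∨ a = n) ∧ (r t).deltaDist u = (r t').deltaDist u := by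
    rcases lt_trichotomy a 0 with ha | ha | ha
    · refine .inr (.inl ⟨ha, ?_⟩)
      exact deltaDist_r_lt_of_coord_pos hneg hr'.neg hr.neg hu.neg (by omega) (by omega)
    · exact .inr (.inr ⟨.inl ha, deltaDist_r_eq_of_coord_eq hone hr hr' hu (.inl ha)⟩)
    rcases hhi.lt_or_eq with han | han
    · exact .inl ⟨⟨ha, han⟩, deltaDist_r_lt_of_coord_pos hone hr hr' hu ha han⟩
    · exact .inr (.inr ⟨.inr han, deltaDist_r_eq_of_coord_eq hone hr hr' hu (.inr han)⟩)
  intro u v hne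
  obtain ⟨a, hlo, hhi, hu⟩ := exists_hasCoord i hone u
  obtain ⟨b, hlo', hhi', hv⟩ := exists_hasCoord i hone v
  by_contra! h
  simp only [Set.mem_insert_iff, Set.mem_singleton_iff, forall_eq_or_imp, forall_eq,
    dist_delta] at h
  obtain ⟨hdr, hdr', hdp⟩ := h
  apply hne
  have hsu := side hu hlo hhi
  have hsv := side hv hlo' hhi'
  by_cases ha0 : a = 0
  · subst ha0
    exact eq_of_deltaDist_eq_of_coord_zero hone hn hr hp hκ hu hv (by omega) hdr hdp
  by_cases hb0 : b = 0
  · subst hb0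
    exact (eq_of_deltaDist_eq_of_coord_zero hone hn hr hp hκ hv hu (by omega) hdr.symm
      hdp.symm).symm
  rcases Ne.lt_or_gt ha0 with ha | ha
  · exact eq_of_deltaDist_eq_of_coord_pos hneg hr'.neg hp' (by omega) hu.neg (by omega)
      hv.neg (by omega) hdr' hdp
  · exact eq_of_deltaDist_eq_of_coord_pos hone hr hp (by omega) hu (by omega) hv (by omega) hdr hdp

theorem exists_isResolving_card_eq_three (hn : 3 ≤ n) : ∃ W : Finset (HCLVertex n), W.card = 3 ∧
    IsResolving (Delta n) W ∧ ∀ u ∈ W, ∀ v ∈ W, ¬ (Delta n).Adj u v := by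
  obtain ⟨t, ht⟩ := exists_hasCoord_one_r (n := n) (i := 0) (.inl rfl)
  obtain ⟨t', ht'⟩ := exists_hasCoord_one_r (n := n) (i := 0) (.inr rfl)
  obtain ⟨c, hc⟩ : ∃ c : ZMod n, HasCoord 0 1 (2 * ((n + 1) / 2)) (p c) := ⟨_, hasCoord_p _⟩
  have hne : r t ≠ r t' := ht.ne (.inl rfl) ht'.neg (by omega) (by omega)
  refine ⟨{r t, r t', p c}, ?_, ?_, ?_⟩
  · exact Finset.card_eq_three.2 ⟨_, _, _, hne, by simp, by simp, rfl⟩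
  · simpa using isResolving_of_hasCoord hn ht ht'.neg hc (by omega)
  · simp [Delta, gammaRel, deltaRel]

end HCLVertex

/-- The degree bound of Khuller, Raghavachari and Rosenfeld: the neighbours of `w` are told apart by
the other members of `W`, each of which has only three distances available for them. -/
theorem IsResolving.card_le_three_pow {V : Type*} {G : SimpleGraph V}
    {W N : Finset V} {w : V} (hW : IsResolving G W) (hw : w ∈ W) (hN : ∀ x ∈ N, G.Adj w x) :
    N.card ≤ 3 ^ (W.card - 1) := by
  classical
  let near (v : V) : Finset ℕ := Finset.Icc (G.dist v w - 1) (G.dist v w + 1)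
  have hnear (v : V) : (near v).card ≤ 3 := by
    rw [Nat.card_Icc]
    omega
  calc
    N.card ≤ (Fintype.piFinset fun v : W.erase w ↦ near v).card := by
      refine Finset.card_le_card_of_injOn (fun x v ↦ G.dist v x) (fun x hx ↦ ?_)
        fun x hx y hy hxy ↦ ?_
      · refine Finset.mem_coe.2 (Fintype.mem_piFinset.2 fun v ↦ Finset.mem_Icc.2 ?_)
        change _ ≤ G.dist v x ∧ G.dist v x ≤ _
        have := SimpleGraph.Adj.diff_dist_adj (u := v.1) (hN x hx)
        omega
      · by_contra hne
        obtain ⟨v, hv, hvne⟩ := hW x y hne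
        rcases eq_or_ne v w with rfl | hvw
        · simp [SimpleGraph.dist_eq_one_iff_adj.2 (hN x hx),
            SimpleGraph.dist_eq_one_iff_adj.2 (hN y hy)] at hvne
        · exact hvne (congrFun hxy ⟨v, Finset.mem_erase.2 ⟨hvw, hv⟩⟩)
    _ = ∏ v : W.erase w, (near v).card := Fintype.card_piFinset _
    _ ≤ 3 ^ (W.card - 1) := by
      simpa [Finset.card_erase_of_mem hw] using
        Finset.prod_le_pow_card Finset.univ (fun v : W.erase w ↦ (near v).card) 3 fun v _ ↦ hnear v

theorem not_isResolving_of_r {n : ℕ} (hn : 2 ≤ n) {W : Finset (HCLVertex n)} (hW : W.card ≤ 2)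
    {t : ZMod n} (ht : .r t ∈ W) : ¬ IsResolving (Delta n) W := by
  intro h
  have : Fact (1 < n) := ⟨hn⟩
  have hN : ∀ x ∈ ({.q t, .q (t + 1), .s t, .s (t - 1)} : Finset (HCLVertex n)),
      (Delta n).Adj (.r t) x := by
    have hs := delta_adj_s_r (t - 1)
    rw [sub_add_cancel] at hs
    simp [delta_adj_r_q, delta_adj_r_s, (delta_adj_q_r t).symm, hs.symm]
  have hcard : ({.q t, .q (t + 1), .s t, .s (t - 1)} : Finset (HCLVertex n)).card = 4 := by
    simp [eq_sub_iff_add_eq]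
  have hle : 3 ^ (W.card - 1) ≤ 3 ^ (2 - 1) :=
    Nat.pow_le_pow_right three_pos (Nat.sub_le_sub_right hW 1)
  have := h.card_le_three_pow ht hN
  omega

theorem delta_independent_metric_number_eq_three_general (n : ℕ) (hn : 3 ≤ n) :
    (∃ W : Finset (HCLVertex n), W.card = 3 ∧ IsResolving (Delta n) ↑W ∧
      ∀ u ∈ W, ∀ v ∈ W, ¬ (Delta n).Adj u v) ∧
    (∀ W : Finset (HCLVertex n), W.card = 2 → ¬ IsResolving (Delta n) ↑W) := by
  have : NeZero n := ⟨by omega⟩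
  refine ⟨HCLVertex.exists_isResolving_card_eq_three hn, fun W hW ↦ ?_⟩
  by_cases hr : ∃ t, HCLVertex.r t ∈ W
  · obtain ⟨t, ht⟩ := hr
    exact not_isResolving_of_r (by omega) hW.le ht
  have hweight {w : HCLVertex n} (hw : w ∈ W) : w.weight ≠ 3 := by
    rcases w with t | t | t | t
    case r => exact absurd ⟨t, hw⟩ hr
    all_goals simp [HCLVertex.weight]
  obtain ⟨u, v, -, rfl⟩ := Finset.card_eq_two.1 hW
  simpa using HCLVertex.not_isResolving_of_weight_ne_three hn (hweight (w := u) (by simp))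
    (hweight (w := v) (by simp))

theorem delta_independent_metric_number_eq_three (n : ℕ) (hn : 6 ≤ n) :
    (∃ W : Finset (HCLVertex n), W.card = 3 ∧ IsResolving (Delta n) ↑W ∧
      ∀ u ∈ W, ∀ v ∈ W, ¬ (Delta n).Adj u v) ∧
    (∀ W : Finset (HCLVertex n), W.card = 2 → ¬ IsResolving (Delta n) ↑W) :=
  delta_independent_metric_number_eq_three_general n (by omega)
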